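/- arXiv:1909.12274 — 4 statements merged into one kernel-verified Lean document; each statement's English description precedes it below -/
import Mathlib

section
/- Let (X, d) be a metric space, H a real Hilbert space, and k : X → H a continuous map with sup_{x ∈ X} ⟪k x, k x⟫ ≤ K̄ < ∞ for some constant K̄. Let d ∈ ℕ, A ∈ ℝ^{d×d}, B ∈ ℝ^d, P ∈ ℝ^{d×d}, let Γ : H → H be a continuous, self-adjoint, positive-definite linear operator with continuous inverse Γ⁻¹, and let x : [0,∞) → X be continuous. Then for every initial condition (x̃₀, f̃₀) ∈ ℝ^d × H there exists a unique continuously differentiable function t ↦ (x̃(t), f̃(t)) ∈ ℝ^d × H on [0,∞) with (x̃(0), f̃(0)) = (x̃₀, f̃₀) satisfying the error equations x̃′(t) = A x̃(t) + ⟪k(x(t)), f̃(t)⟫ B and f̃′(t) = −Γ⁻¹( (B ⬝ (P x̃(t))) • k(x(t)) ) for all t ≥ 0. -/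
open Set Filter MeasureTheory
open scoped InnerProductSpace

/-!
The right-hand side of the error equations is `G t y`, where `y ↦ G t y` is linear with operator
norm bounded by a constant `C` independent of `t`, because the kernel is bounded, and `G` is jointly
continuous once the path `x` has been extended to negative times by its value at `0`.

Existence holds globally in one step: writing `u t = exp (2 C t) • v t`, the integral equation
`u t = y₀ + ∫₀ᵗ G s (u s) ds` becomes a fixed-point equation for a `1/2`-contraction of the Banach
space of bounded continuous functions `v` (Bielecki's weighted norm), so no gluing of local
solutions is needed. This is `exists_global_solution`. Uniqueness is Grönwall's inequality.
-/

/-- The weight `exp (-2 C τ)` compensates the growth rate `exp (2 C s)` of the integrand up to the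
factor `1 / (2 C)`; this is what makes the weighted Picard operator a contraction. -/
lemma norm_weighted_integral_le {E : Type*} [NormedAddCommGroup E] [NormedSpace ℝ E]
    {C D τ : ℝ} (hC : 0 < C) (hD : 0 ≤ D) (hτ : 0 ≤ τ) {g : ℝ → E}
    (hg : ∀ s, 0 ≤ s → ‖g s‖ ≤ D * Real.exp (2 * C * s)) :
    ‖Real.exp (-(2 * C * τ)) • ∫ s in (0 : ℝ)..τ, g s‖ ≤ D / (2 * C) := by
  have hderiv : ∀ s ∈ uIcc (0 : ℝ) τ,
      HasDerivAt (fun s => D / (2 * C) * Real.exp (2 * C * s)) (D * Real.exp (2 * C * s)) s := by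
    intro s _
    have h := (((hasDerivAt_id s).const_mul (2 * C)).exp).const_mul (D / (2 * C))
    refine h.congr_deriv ?_
    simp only [id, mul_one]
    field_simp
  have hint : ∫ s in (0 : ℝ)..τ, D * Real.exp (2 * C * s)
      = D / (2 * C) * Real.exp (2 * C * τ) - D / (2 * C) := by
    rw [intervalIntegral.integral_eq_sub_of_hasDerivAt hderiv
      (Continuous.intervalIntegrable (by fun_prop) _ _)]
    simp
  have h1 : ‖∫ s in (0 : ℝ)..τ, g s‖ ≤ D / (2 * C) * Real.exp (2 * C * τ) := by
    refine (intervalIntegral.norm_integral_le_of_norm_le hτ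
      (ae_of_all _ fun s hs => hg s hs.1.le)
      (Continuous.intervalIntegrable (by fun_prop) _ _)).trans ?_
    rw [hint]
    have : 0 ≤ D / (2 * C) := by positivity
    linarith
  rw [norm_smul, Real.norm_of_nonneg (Real.exp_nonneg _)]
  calc _ ≤ Real.exp (-(2 * C * τ)) * (D / (2 * C) * Real.exp (2 * C * τ)) := by gcongr
    _ = D / (2 * C) * (Real.exp (-(2 * C * τ)) * Real.exp (2 * C * τ)) := by ring
    _ = D / (2 * C) := by rw [← Real.exp_add]; simp

/-- A jointly continuous, uniformly Lipschitz vector field vanishing at the origin has a solution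
on all of `[0, ∞)` through every initial value. -/
lemma exists_global_solution {E : Type*} [NormedAddCommGroup E] [NormedSpace ℝ E] [CompleteSpace E]
    (G : ℝ → E → E) (hG : Continuous fun p : ℝ × E => G p.1 p.2) {C : ℝ} (hC : 0 < C)
    (hL : ∀ t y z, ‖G t y - G t z‖ ≤ C * ‖y - z‖) (h0 : ∀ t, G t 0 = 0) (y₀ : E) :
    ∃ u : ℝ → E, u 0 = y₀ ∧ ∀ t ∈ Ici (0 : ℝ), HasDerivWithinAt u (G t (u t)) (Ici 0) t := by
  have hgc : ∀ v : BoundedContinuousFunction ℝ E,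
      Continuous fun s => G s (Real.exp (2 * C * s) • v s) := fun v =>
    hG.comp (continuous_id.prodMk
      ((by fun_prop : Continuous fun s : ℝ => Real.exp (2 * C * s)).smul v.continuous))
  have hpc : ∀ v : BoundedContinuousFunction ℝ E,
      Continuous fun τ : ℝ => ∫ s in (0 : ℝ)..τ, G s (Real.exp (2 * C * s) • v s) := fun v =>
    intervalIntegral.continuous_primitive (fun a b => (hgc v).intervalIntegrable a b) 0
  -- The weighted Picard operator, frozen at its value at `0` for negative times.
  let Φ : BoundedContinuousFunction ℝ E → BoundedContinuousFunction ℝ E := fun v =>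
    BoundedContinuousFunction.ofNormedAddCommGroup
      (fun t => Real.exp (-(2 * C * max t 0)) •
        (y₀ + ∫ s in (0 : ℝ)..max t 0, G s (Real.exp (2 * C * s) • v s)))
      ((by fun_prop : Continuous fun t : ℝ => Real.exp (-(2 * C * max t 0))).smul
        (continuous_const.add ((hpc v).comp (by fun_prop : Continuous fun t : ℝ => max t 0))))
      (‖y₀‖ + C * ‖v‖ / (2 * C)) (by
        intro t
        rw [smul_add]
        refine (norm_add_le _ _).trans (add_le_add ?_ ?_)
        · rw [norm_smul, Real.norm_of_nonneg (Real.exp_nonneg _)]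
          refine mul_le_of_le_one_left (norm_nonneg _) (Real.exp_le_one_iff.2 ?_)
          have : 0 ≤ 2 * C * max t 0 := mul_nonneg (by positivity) (le_max_right _ _)
          linarith
        · refine norm_weighted_integral_le hC (by positivity) (le_max_right _ _) fun s _ => ?_
          have h := hL s (Real.exp (2 * C * s) • v s) 0
          rw [h0, sub_zero, sub_zero, norm_smul, Real.norm_of_nonneg (Real.exp_nonneg _)] at h
          calc _ ≤ _ := h
            _ ≤ C * (Real.exp (2 * C * s) * ‖v‖) := by gcongr; exact v.norm_coe_le_norm s
            _ = _ := by ring)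
  have hΦ : ContractingWith (1 / 2) Φ := by
    refine ⟨by rw [← NNReal.coe_lt_coe]; norm_num, LipschitzWith.of_dist_le_mul fun v w => ?_⟩
    refine (BoundedContinuousFunction.dist_le (by positivity)).2 fun t => ?_
    have key : dist (Φ v t) (Φ w t) ≤ C * dist v w / (2 * C) := by
      have e : Φ v t - Φ w t = Real.exp (-(2 * C * max t 0)) • ∫ s in (0 : ℝ)..max t 0,
          (G s (Real.exp (2 * C * s) • v s) - G s (Real.exp (2 * C * s) • w s)) := by
        rw [intervalIntegral.integral_sub ((hgc v).intervalIntegrable _ _)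
          ((hgc w).intervalIntegrable _ _)]
        simp only [Φ, BoundedContinuousFunction.coe_ofNormedAddCommGroup]
        rw [← smul_sub, add_sub_add_left_eq_sub]
      rw [dist_eq_norm, e]
      refine norm_weighted_integral_le hC (by positivity) (le_max_right _ _) fun s _ => ?_
      refine (hL _ _ _).trans ?_
      rw [← smul_sub, norm_smul, Real.norm_of_nonneg (Real.exp_nonneg _)]
      calc _ ≤ C * (Real.exp (2 * C * s) * dist v w) := by
            gcongr
            rw [← dist_eq_norm]
            exact BoundedContinuousFunction.dist_coe_le_dist s
        _ = _ := by ring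
    refine key.trans (le_of_eq ?_)
    push_cast
    field_simp
  obtain ⟨v, hv⟩ : ∃ v, Φ v = v := ⟨_, hΦ.fixedPoint_isFixedPt⟩
  have hu : ∀ t ∈ Ici (0 : ℝ), Real.exp (2 * C * t) • v t
      = y₀ + ∫ s in (0 : ℝ)..t, G s (Real.exp (2 * C * s) • v s) := by
    intro t ht
    have h : Φ v t = v t := by rw [hv]
    simp only [Φ, BoundedContinuousFunction.coe_ofNormedAddCommGroup, max_eq_left (mem_Ici.1 ht)]
      at h
    conv_lhs => rw [← h]
    rw [smul_smul, ← Real.exp_add]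
    simp
  refine ⟨fun t => Real.exp (2 * C * t) • v t, by simpa using hu 0 self_mem_Ici, fun t ht => ?_⟩
  have hd := ((hgc v).integral_hasStrictDerivAt 0 t).hasDerivAt.const_add y₀
  exact hd.hasDerivWithinAt.congr hu (hu t ht)

/-- Existence and uniqueness of continuously differentiable solutions of the
RKH embedding error equations on `[0, ∞)`. -/
theorem rkh_embedding_error_equations_existence_uniqueness
    {X : Type*} [MetricSpace X]
    {H : Type*} [NormedAddCommGroup H] [InnerProductSpace ℝ H] [CompleteSpace H]
    (k : X → H) (hk : Continuous k)
    (Kbar : ℝ) (hKbar : ∀ x : X, ⟪k x, k x⟫_ℝ ≤ Kbar)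
    (d : ℕ) (A : Matrix (Fin d) (Fin d) ℝ) (B : EuclideanSpace ℝ (Fin d))
    (P : Matrix (Fin d) (Fin d) ℝ)
    (Γ Γinv : H →L[ℝ] H) (hΓsa : IsSelfAdjoint Γ)
    (hΓpos : ∀ f : H, f ≠ 0 → 0 < ⟪Γ f, f⟫_ℝ)
    (hΓinv₁ : ∀ f : H, Γinv (Γ f) = f) (hΓinv₂ : ∀ f : H, Γ (Γinv f) = f)
    (x : ℝ → X) (hx : ContinuousOn x (Ici 0))
    (xt0 : EuclideanSpace ℝ (Fin d)) (ft0 : H) :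
    ∃ u : ℝ → EuclideanSpace ℝ (Fin d) × H,
      u 0 = (xt0, ft0) ∧
      ContDiffOn ℝ 1 u (Ici 0) ∧
      (∀ t ∈ Ici (0 : ℝ),
        HasDerivWithinAt u
          (Matrix.toEuclideanLin A (u t).1 + ⟪k (x t), (u t).2⟫_ℝ • B,
           -Γinv (⟪B, Matrix.toEuclideanLin P (u t).1⟫_ℝ • k (x t))) (Ici 0) t) ∧
      (∀ v : ℝ → EuclideanSpace ℝ (Fin d) × H,
        v 0 = (xt0, ft0) →
        ContDiffOn ℝ 1 v (Ici 0) →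
        (∀ t ∈ Ici (0 : ℝ),
          HasDerivWithinAt v
            (Matrix.toEuclideanLin A (v t).1 + ⟪k (x t), (v t).2⟫_ℝ • B,
             -Γinv (⟪B, Matrix.toEuclideanLin P (v t).1⟫_ℝ • k (x t))) (Ici 0) t) →
        EqOn u v (Ici 0)) := by
  obtain ⟨κ, hκ0, hκ⟩ : ∃ κ : ℝ, 0 ≤ κ ∧ ∀ p, ‖k p‖ ≤ κ := by
    refine ⟨√Kbar, Real.sqrt_nonneg _, fun p => Real.le_sqrt_of_sq_le ?_⟩
    rw [← real_inner_self_eq_norm_sq]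
    exact hKbar p
  let A' := (Matrix.toEuclideanLin A).toContinuousLinearMap
  let P' := (Matrix.toEuclideanLin P).toContinuousLinearMap
  -- The path is frozen for negative times, which makes the vector field continuous on `ℝ × E`.
  let q : ℝ → H := fun t => k (x (max t 0))
  have hq : Continuous q := hk.comp
    (hx.comp_continuous (by fun_prop) fun t => mem_Ici.2 (le_max_right t 0))
  have hqκ : ∀ t, ‖q t‖ ≤ κ := fun t => hκ _
  let G : ℝ → EuclideanSpace ℝ (Fin d) × H → EuclideanSpace ℝ (Fin d) × H := fun t y =>
    (A' y.1 + ⟪q t, y.2⟫_ℝ • B, -Γinv (⟪B, P' y.1⟫_ℝ • q t))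
  have hG : Continuous fun p : ℝ × (EuclideanSpace ℝ (Fin d) × H) => G p.1 p.2 := by
    simp only [G]
    fun_prop
  have hsub : ∀ t y z, G t y - G t z = G t (y - z) := by
    intro t y z
    ext1
    · simp only [G, Prod.fst_sub, Prod.snd_sub, map_sub, inner_sub_right, sub_smul]
      abel
    · simp only [G, Prod.fst_sub, Prod.snd_sub, map_sub, inner_sub_right, sub_smul]
      abel
  let C : ℝ := ‖A'‖ + κ * ‖B‖ + ‖Γinv‖ * (‖B‖ * ‖P'‖ * κ) + 1
  have hC : 0 < C := by positivity
  have hbound : ∀ t w, ‖G t w‖ ≤ C * ‖w‖ := by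
    intro t w
    have hw1 : ‖w.1‖ ≤ ‖w‖ := norm_fst_le w
    have hw2 : ‖w.2‖ ≤ ‖w‖ := norm_snd_le w
    have h1 : ‖(G t w).1‖ ≤ (‖A'‖ + κ * ‖B‖) * ‖w‖ := by
      calc ‖(G t w).1‖ ≤ ‖A' w.1‖ + ‖⟪q t, w.2⟫_ℝ • B‖ := norm_add_le _ _
        _ ≤ ‖A'‖ * ‖w.1‖ + (‖q t‖ * ‖w.2‖) * ‖B‖ := by
          rw [norm_smul]
          gcongr
          · exact A'.le_opNorm _
          · exact norm_inner_le_norm _ _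
        _ ≤ ‖A'‖ * ‖w‖ + (κ * ‖w‖) * ‖B‖ := by
          gcongr
          exact hqκ t
        _ = _ := by ring
    have h2 : ‖(G t w).2‖ ≤ (‖Γinv‖ * (‖B‖ * ‖P'‖ * κ)) * ‖w‖ := by
      calc ‖(G t w).2‖ = ‖Γinv (⟪B, P' w.1⟫_ℝ • q t)‖ := norm_neg _
        _ ≤ ‖Γinv‖ * (‖⟪B, P' w.1⟫_ℝ‖ * ‖q t‖) := by
          rw [← norm_smul]
          exact Γinv.le_opNorm _
        _ ≤ ‖Γinv‖ * ((‖B‖ * (‖P'‖ * ‖w‖)) * κ) := by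
          gcongr
          · refine (norm_inner_le_norm _ _).trans ?_
            gcongr
            exact (P'.le_opNorm _).trans (by gcongr)
          · exact hqκ t
        _ = _ := by ring
    have n1 : 0 ≤ (‖A'‖ + κ * ‖B‖) * ‖w‖ := by positivity
    have n2 : 0 ≤ (‖Γinv‖ * (‖B‖ * ‖P'‖ * κ)) * ‖w‖ := by positivity
    have e : C * ‖w‖ = (‖A'‖ + κ * ‖B‖) * ‖w‖
        + (‖Γinv‖ * (‖B‖ * ‖P'‖ * κ)) * ‖w‖ + ‖w‖ := by
      simp only [C]
      ring
    rw [e]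
    have n3 := norm_nonneg w
    exact max_le (by linarith) (by linarith)
  have hL : ∀ t y z, ‖G t y - G t z‖ ≤ C * ‖y - z‖ := fun t y z => by
    rw [hsub]
    exact hbound t _
  have hLip : ∀ t, LipschitzWith ⟨C, hC.le⟩ (G t) := fun t =>
    LipschitzWith.of_dist_le_mul fun y z => by
      rw [dist_eq_norm, dist_eq_norm]
      exact hL t y z
  have hGeq : ∀ t ∈ Ici (0 : ℝ), ∀ y : EuclideanSpace ℝ (Fin d) × H,
      (Matrix.toEuclideanLin A y.1 + ⟪k (x t), y.2⟫_ℝ • B,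
        -Γinv (⟪B, Matrix.toEuclideanLin P y.1⟫_ℝ • k (x t))) = G t y := by
    intro t ht y
    simp only [G, q, max_eq_left (mem_Ici.1 ht)]
    rfl
  obtain ⟨u, hu0, hu⟩ := exists_global_solution G hG hC hL
    (fun t => by simpa using (hsub t 0 0).symm) (xt0, ft0)
  have huc : ContinuousOn u (Ici 0) := fun t ht => (hu t ht).continuousWithinAt
  refine ⟨u, hu0, ?_, fun t ht => by rw [hGeq t ht]; exact hu t ht, ?_⟩
  · rw [contDiffOn_one_iff_derivWithin (uniqueDiffOn_Ici 0)]
    refine ⟨fun t ht => (hu t ht).differentiableWithinAt, ?_⟩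
    exact (hG.comp_continuousOn (continuousOn_id.prodMk huc)).congr fun t ht =>
      (hu t ht).derivWithin (uniqueDiffOn_Ici 0 t ht)
  · intro v hv0 _ hv t ht
    have hvc : ContinuousOn v (Ici 0) := fun t ht => (hv t ht).continuousWithinAt
    refine ODE_solution_unique (a := 0) (b := t) hLip (huc.mono Icc_subset_Ici_self)
      (fun s hs => (hu s hs.1).mono (Ici_subset_Ici.2 hs.1)) (hvc.mono Icc_subset_Ici_self)
      (fun s hs => ?_) (hu0.trans hv0.symm) ⟨ht, le_rfl⟩
    rw [← hGeq s hs.1]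
    exact (hv s hs.1).mono (Ici_subset_Ici.2 hs.1)
end

section
/- Let (X, d) be a metric space, H a real Hilbert space, and k : X → H a continuous map such that the kernel K(x,y) := ⟪k x, k y⟫ satisfies K(x,y) = 𝔎(d(x,y)) for all x, y ∈ X, where 𝔎 : [0,∞) → ℝ is monotone nonincreasing with 𝔎(0) = 1. Let x : [0,∞) → X be a continuous trajectory, x_∞ ∈ X, and fix ε > 0 with 𝔎(ε) > 0 and constants Δ, T₀, γ_ε > 0. For each t ≥ T₀ define I_{t,ε} := { τ ∈ [t, t+Δ] : d(x(τ), x_∞) < ε }, and suppose the Lebesgue measure satisfies μ(I_{t,ε}) ≥ γ_ε for all t ≥ T₀. Then the singleton Ω := {x_∞} and the subspace H_Ω = span{k(x_∞)} are persistently excited: there exist constants γ1, γ2 > 0 such that for every t ≥ T₀ and every f ∈ H_Ω, γ1·‖f‖_H² ≤ ∫_t^{t+Δ} ⟪k(x(τ)), f⟫² dτ ≤ γ2·‖f‖_H². -/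
/-!
Every `f` in the span of `k xinf` is `a • k xinf` with `‖f‖ = |a|`, so the integrand
`⟪k (x τ), f⟫ ^ 2` equals `𝔎 (dist (x τ) xinf) ^ 2 * ‖f‖ ^ 2`. While the trajectory is in the
`ε`-ball, monotonicity bounds it below by `𝔎 ε ^ 2 * ‖f‖ ^ 2`, and this happens for time at least
`γε` in each window, so Markov's inequality gives `γ₁ = 𝔎 ε ^ 2 * γε`. Since `‖k y‖ ^ 2 = 𝔎 0 = 1`,
Cauchy-Schwarz bounds the integrand above by `‖f‖ ^ 2`, which gives `γ₂ = Δ`.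
-/

open Set Filter MeasureTheory
open scoped InnerProductSpace

/-- If the trajectory spends at least `γε` time of each window `[t, t+Δ]` in the
`ε`-ball around `xinf`, then the singleton `{xinf}` and the subspace spanned by `k xinf`
are persistently excited (Theorem 3 of the paper). -/
theorem pe_of_visitation_time
    {X : Type*} [MetricSpace X]
    {H : Type*} [NormedAddCommGroup H] [InnerProductSpace ℝ H] [CompleteSpace H]
    (k : X → H) (hk : Continuous k)
    (𝔎 : ℝ → ℝ) (h𝔎mono : AntitoneOn 𝔎 (Ici 0)) (h𝔎0 : 𝔎 0 = 1)
    (hker : ∀ x y : X, ⟪k x, k y⟫_ℝ = 𝔎 (dist x y))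
    (x : ℝ → X) (hx : ContinuousOn x (Ici 0))
    (xinf : X) (ε : ℝ) (hε : 0 < ε) (h𝔎ε : 0 < 𝔎 ε)
    (Δ T₀ γε : ℝ) (hΔ : 0 < Δ) (hT₀ : 0 < T₀) (hγε : 0 < γε)
    (hvisit : ∀ t ≥ T₀,
      ENNReal.ofReal γε ≤
        volume {τ : ℝ | τ ∈ Icc t (t + Δ) ∧ dist (x τ) xinf < ε}) :
    ∃ γ₁ > (0 : ℝ), ∃ γ₂ > (0 : ℝ), ∀ t ≥ T₀,
      ∀ f ∈ (Submodule.span ℝ (k '' ({xinf} : Set X))).topologicalClosure,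
        γ₁ * ‖f‖ ^ 2 ≤ (∫ τ in t..(t + Δ), (⟪k (x τ), f⟫_ℝ) ^ 2) ∧
        (∫ τ in t..(t + Δ), (⟪k (x τ), f⟫_ℝ) ^ 2) ≤ γ₂ * ‖f‖ ^ 2 := by
  have hnorm : ∀ y, ‖k y‖ = 1 := fun y => by
    have h : ‖k y‖ ^ 2 = 1 := by
      rw [← real_inner_self_eq_norm_sq, hker, dist_self, h𝔎0]
    exact (pow_eq_one_iff_of_nonneg (norm_nonneg _) two_ne_zero).1 h
  refine ⟨𝔎 ε ^ 2 * γε, by positivity, Δ, hΔ, fun t ht f hf => ?_⟩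
  -- a line is finite-dimensional, hence already closed
  rw [image_singleton,
    (Submodule.closed_of_finiteDimensional _).submodule_topologicalClosure_eq] at hf
  obtain ⟨a, rfl⟩ := Submodule.mem_span_singleton.1 hf
  have hfn : ‖a • k xinf‖ ^ 2 = a ^ 2 := by
    rw [norm_smul, hnorm, mul_one, Real.norm_eq_abs, sq_abs]
  have hg : ∀ τ, ⟪k (x τ), a • k xinf⟫_ℝ = a * 𝔎 (dist (x τ) xinf) := fun τ => by
    rw [inner_smul_right, hker]
  have htΔ : t ≤ t + Δ := by linarith
  have hcont : ContinuousOn (fun τ => ⟪k (x τ), a • k xinf⟫_ℝ ^ 2) (Icc t (t + Δ)) := by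
    have hkx : ContinuousOn (fun τ => k (x τ)) (Icc t (t + Δ)) :=
      hk.comp_continuousOn (hx.mono fun τ hτ => mem_Ici.2 (by linarith [hτ.1]))
    exact (hkx.inner continuousOn_const).pow 2
  constructor
  · rw [intervalIntegral.integral_of_le htΔ, ← integral_Icc_eq_integral_Ioc]
    have hmarkov := mul_meas_ge_le_integral_of_nonneg
      (μ := volume.restrict (Icc t (t + Δ)))
      (f := fun τ => ⟪k (x τ), a • k xinf⟫_ℝ ^ 2)
      (ae_of_all _ fun τ => sq_nonneg _) hcont.integrableOn_Icc (a ^ 2 * 𝔎 ε ^ 2)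
    have hmeas : γε ≤ (volume.restrict (Icc t (t + Δ))).real
        {τ | a ^ 2 * 𝔎 ε ^ 2 ≤ ⟪k (x τ), a • k xinf⟫_ℝ ^ 2} := by
      refine (ENNReal.ofReal_le_iff_le_toReal (measure_ne_top _ _)).1 ?_
      refine (hvisit t ht).trans ((measure_mono ?_).trans (Measure.le_restrict_apply _ _))
      rintro τ ⟨hτ, hd⟩
      refine ⟨?_, hτ⟩
      have hle : 𝔎 ε ≤ 𝔎 (dist (x τ) xinf) :=
        h𝔎mono (mem_Ici.2 dist_nonneg) (mem_Ici.2 hε.le) hd.le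
      rw [Set.mem_ofPred_eq, hg, mul_pow]
      gcongr
    rw [hfn]
    calc 𝔎 ε ^ 2 * γε * a ^ 2 = a ^ 2 * 𝔎 ε ^ 2 * γε := by ring
      _ ≤ _ := mul_le_mul_of_nonneg_left hmeas (by positivity)
      _ ≤ _ := hmarkov
  · calc ∫ τ in t..(t + Δ), ⟪k (x τ), a • k xinf⟫_ℝ ^ 2
        ≤ ∫ _ in t..(t + Δ), ‖a • k xinf‖ ^ 2 := by
          refine intervalIntegral.integral_mono_on htΔ
            (hcont.intervalIntegrable_of_Icc htΔ) intervalIntegrable_const fun τ _ => ?_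
          rw [sq_le_sq, abs_norm]
          simpa [hnorm] using abs_real_inner_le_norm (k (x τ)) (a • k xinf)
      _ = Δ * ‖a • k xinf‖ ^ 2 := by simp
end

section
/- Let (X, d) be a metric space, H a real Hilbert space, and k : X → H a continuous map such that the kernel K(x,y) := ⟪k x, k y⟫ satisfies K(x,y) = 𝔎(d(x,y)) for all x, y ∈ X, where 𝔎 : [0,∞) → ℝ is monotone nonincreasing with 𝔎(0) = 1 and 𝔎(ε₀) > 0 for some ε₀ > 0. Let x : [0,∞) → X be a continuous trajectory with lim_{t→∞} x(t) = x_∞ ∈ X. Then for every Δ > 0 the singleton Ω := {x_∞} and the subspace H_Ω = span{k(x_∞)} are persistently excited: there exist constants γ1, γ2, T > 0 such that for every t ≥ T and every f ∈ H_Ω, γ1·‖f‖_H² ≤ ∫_t^{t+Δ} ⟪k(x(τ)), f⟫² dτ ≤ γ2·‖f‖_H². -/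
open Set Filter MeasureTheory
open scoped InnerProductSpace

/-! The subspace is the line `ℝ • k xinf`, and `k xinf` is a unit vector because `𝔎 0 = 1`. So
`f = c • k xinf` with `‖f‖ = |c|`, and `⟪k (x τ), f⟫ ^ 2 = ‖f‖ ^ 2 * ⟪k (x τ), k xinf⟫ ^ 2`. By
continuity of `k`, the factor `⟪k (x τ), k xinf⟫` tends to `‖k xinf‖ ^ 2 = 1`, hence eventually lies
between `1/2` and `2`; integrating over an interval of length `Δ` gives the constants `Δ/4` and
`4Δ`. -/

/-- If the trajectory converges to `xinf`, then the singleton `{xinf}` and the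
subspace spanned by `k xinf` are persistently excited. -/
theorem pe_of_convergent_trajectory
    {X : Type*} [MetricSpace X]
    {H : Type*} [NormedAddCommGroup H] [InnerProductSpace ℝ H] [CompleteSpace H]
    (k : X → H) (hk : Continuous k)
    (𝔎 : ℝ → ℝ) (h𝔎mono : AntitoneOn 𝔎 (Ici 0)) (h𝔎0 : 𝔎 0 = 1)
    (hεpos : ∃ ε₀ > (0 : ℝ), 0 < 𝔎 ε₀)
    (hker : ∀ x y : X, ⟪k x, k y⟫_ℝ = 𝔎 (dist x y))
    (x : ℝ → X) (hx : ContinuousOn x (Ici 0))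
    (xinf : X) (hconv : Tendsto x atTop (nhds xinf)) :
    ∀ Δ > (0 : ℝ), ∃ γ₁ > (0 : ℝ), ∃ γ₂ > (0 : ℝ), ∃ T > (0 : ℝ), ∀ t ≥ T,
      ∀ f ∈ (Submodule.span ℝ (k '' ({xinf} : Set X))).topologicalClosure,
        γ₁ * ‖f‖ ^ 2 ≤ (∫ τ in t..(t + Δ), (⟪k (x τ), f⟫_ℝ) ^ 2) ∧
        (∫ τ in t..(t + Δ), (⟪k (x τ), f⟫_ℝ) ^ 2) ≤ γ₂ * ‖f‖ ^ 2 := by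
  intro Δ hΔ
  have hone : ⟪k xinf, k xinf⟫_ℝ = 1 := by rw [hker, dist_self, h𝔎0]
  have hnorm : ‖k xinf‖ ^ 2 = 1 := by rw [← real_inner_self_eq_norm_sq, hone]
  have hlim : Tendsto (fun τ => ⟪k (x τ), k xinf⟫_ℝ) atTop (nhds 1) := by
    rw [← hone]
    exact ((hk.tendsto xinf).comp hconv).inner tendsto_const_nhds
  obtain ⟨T, hT⟩ := eventually_atTop.1
    (hlim.eventually (Ioo_mem_nhds (show (1 / 2 : ℝ) < 1 by norm_num) one_lt_two))
  refine ⟨Δ / 4, by positivity, 4 * Δ, by positivity, max T 1, by positivity, ?_⟩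
  intro t ht f hf
  have htT : T ≤ t := (le_max_left _ _).trans ht
  have ht1 : 1 ≤ t := (le_max_right _ _).trans ht
  have htΔ : t ≤ t + Δ := by linarith
  -- A finite-dimensional subspace is closed, so the closure adds nothing to the span.
  rw [image_singleton, (Submodule.closed_of_finiteDimensional
    (Submodule.span ℝ {k xinf})).submodule_topologicalClosure_eq] at hf
  obtain ⟨c, rfl⟩ := Submodule.mem_span_singleton.1 hf
  have hc : ‖c • k xinf‖ ^ 2 = c ^ 2 := by
    rw [norm_smul, mul_pow, hnorm, mul_one, Real.norm_eq_abs, sq_abs]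
  rw [hc]
  have hint : IntervalIntegrable (fun τ => ⟪k (x τ), c • k xinf⟫_ℝ ^ 2) volume t (t + Δ) := by
    apply ContinuousOn.intervalIntegrable
    rw [uIcc_of_le htΔ]
    have hxc : ContinuousOn x (Icc t (t + Δ)) :=
      hx.mono fun τ hτ => mem_Ici.2 (by linarith [hτ.1])
    exact ((hk.comp_continuousOn hxc).inner continuousOn_const).pow 2
  have hlo : ∀ τ ∈ Icc t (t + Δ), c ^ 2 / 4 ≤ ⟪k (x τ), c • k xinf⟫_ℝ ^ 2 := by
    intro τ hτ
    obtain ⟨h, -⟩ := hT τ (htT.trans hτ.1)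
    rw [real_inner_smul_right, mul_pow]
    have : 1 / 4 ≤ ⟪k (x τ), k xinf⟫_ℝ ^ 2 := by nlinarith
    nlinarith [mul_le_mul_of_nonneg_left this (sq_nonneg c)]
  have hhi : ∀ τ ∈ Icc t (t + Δ), ⟪k (x τ), c • k xinf⟫_ℝ ^ 2 ≤ 4 * c ^ 2 := by
    intro τ hτ
    obtain ⟨h, h'⟩ := hT τ (htT.trans hτ.1)
    rw [real_inner_smul_right, mul_pow]
    have : ⟪k (x τ), k xinf⟫_ℝ ^ 2 ≤ 4 := by nlinarith
    nlinarith [mul_le_mul_of_nonneg_left this (sq_nonneg c)]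
  have h1 := intervalIntegral.integral_mono_on htΔ intervalIntegrable_const hint hlo
  have h2 := intervalIntegral.integral_mono_on htΔ hint intervalIntegrable_const hhi
  rw [intervalIntegral.integral_const, smul_eq_mul] at h1 h2
  constructor <;> linarith
end

section
/- Let (X, d) be a metric space, H a real Hilbert space, and k : X → H a continuous map with sup_{x ∈ X} ⟪k x, k x⟫ ≤ K̄ < ∞, and let x : [0,∞) → X be continuous. Assume: (i) the family of functions { τ ↦ ⟪k(x(τ)), f⟫ : f ∈ H, ‖f‖_H = 1 } is uniformly equicontinuous on [0,∞); (ii) there exist constants γ1, γ2, T, Δ > 0 such that for every t ≥ T and every f ∈ H, γ1·‖f‖_H² ≤ ∫_t^{t+Δ} ⟪k(x(τ)), f⟫² dτ ≤ γ2·‖f‖_H². Then there exist constants T′, Δ′, δ, γ > 0 such that for every t ≥ T′ and every f ∈ H with ‖f‖_H = 1 there exists s ∈ [t, t+Δ′] with | ∫_s^{s+δ} ⟪k(x(τ)), f⟫ dτ | > γ. -/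
open Set Filter MeasureTheory
open scoped InnerProductSpace

/-!
Write `g τ = ⟪k (x τ), f⟫` for a unit vector `f`. The lower excitation bound forces
`g τ ^ 2 > γ₁ / (2Δ)` at some point `s` of each window `[t, t + Δ]`, since otherwise the integral
of `g ^ 2` over the window would be at most `γ₁ / 2`. With `c = √(γ₁ / (2Δ))`, equicontinuity gives
a length `δ`, independent of `f` and `t`, such that `g` stays within `c / 2` of `g s` on
`[s, s + δ]`. There `g` cannot change sign, so the integral of `g` over this interval has absolute
value at least `δ * c / 2`.
-/

/-- Energy at least `γ` over a window of length `Δ`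
forces a point of the window where the square exceeds `γ / (2Δ)`. No integrability is needed:
the integral of a non-integrable function is zero, which is below `γ`. -/
lemma exists_sq_gt_of_le_integral (g : ℝ → ℝ) (γ t Δ : ℝ) (hγ : 0 < γ) (hΔ : 0 < Δ)
    (h : γ ≤ ∫ τ in t..(t + Δ), g τ ^ 2) :
    ∃ s ∈ Icc t (t + Δ), γ / (2 * Δ) < g s ^ 2 := by
  by_contra! hcon
  have hb : ‖∫ τ in t..(t + Δ), g τ ^ 2‖ ≤ γ / (2 * Δ) * |t + Δ - t| := by
    refine intervalIntegral.norm_integral_le_of_norm_le_const fun τ hτ => ?_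
    rw [uIoc_of_le (by linarith)] at hτ
    rw [Real.norm_of_nonneg (sq_nonneg _)]
    exact hcon τ ⟨hτ.1.le, hτ.2⟩
  have he : γ / (2 * Δ) * |t + Δ - t| = γ / 2 := by
    rw [add_sub_cancel_left, abs_of_pos hΔ]
    field_simp
  rw [he] at hb
  linarith [Real.le_norm_self (∫ τ in t..(t + Δ), g τ ^ 2)]

/-- If `g` stays within `c / 2` of a value of modulus at least `c` on an interval of length `δ`,
then its integral there has modulus at least `δ * c / 2`. -/
lemma le_abs_integral_of_near (g : ℝ → ℝ) (s δ c : ℝ) (hδ : 0 < δ)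
    (hg : IntervalIntegrable g volume s (s + δ)) (hs : c ≤ |g s|)
    (hnear : ∀ τ ∈ Icc s (s + δ), |g τ - g s| ≤ c / 2) :
    δ * c / 2 ≤ |∫ τ in s..(s + δ), g τ| := by
  have hb : ‖∫ τ in s..(s + δ), (g τ - g s)‖ ≤ c / 2 * |s + δ - s| := by
    refine intervalIntegral.norm_integral_le_of_norm_le_const fun τ hτ => ?_
    rw [uIoc_of_le (by linarith)] at hτ
    exact hnear τ ⟨hτ.1.le, hτ.2⟩
  rw [intervalIntegral.integral_sub hg intervalIntegrable_const,
    intervalIntegral.integral_const, add_sub_cancel_left, abs_of_pos hδ, Real.norm_eq_abs,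
    smul_eq_mul, abs_sub_comm] at hb
  have h1 := abs_sub_abs_le_abs_sub (δ * g s) (∫ τ in s..(s + δ), g τ)
  rw [abs_mul, abs_of_pos hδ] at h1
  have h2 := mul_le_mul_of_nonneg_left hs hδ.le
  linarith

/-- Under uniform equicontinuity, the persistence of excitation condition implies the
integral excitation condition (Equation (13) of the paper): on each window one can find
a subinterval on which the averaged evaluation of any unit-norm `f` is bounded away
from zero. -/
theorem pe_implies_integral_excitation
    {X : Type*} [MetricSpace X]
    {H : Type*} [NormedAddCommGroup H] [InnerProductSpace ℝ H] [CompleteSpace H]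
    (k : X → H) (hk : Continuous k)
    (Kbar : ℝ) (hKbar : ∀ x : X, ⟪k x, k x⟫_ℝ ≤ Kbar)
    (x : ℝ → X) (hx : ContinuousOn x (Ici 0))
    -- (i) uniform equicontinuity of { τ ↦ ⟪k(x(τ)), f⟫ : ‖f‖ = 1 } on [0,∞)
    (hequi : ∀ ε > (0 : ℝ), ∃ δ > (0 : ℝ), ∀ f : H, ‖f‖ = 1 →
      ∀ a b : ℝ, 0 ≤ a → 0 ≤ b → |a - b| < δ →
        |⟪k (x a), f⟫_ℝ - ⟪k (x b), f⟫_ℝ| < ε)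
    -- (ii) persistence of excitation for the full space H
    (γ₁ γ₂ T Δ : ℝ) (hγ₁ : 0 < γ₁) (hγ₂ : 0 < γ₂) (hT : 0 < T) (hΔ : 0 < Δ)
    (hPE : ∀ t ≥ T, ∀ f : H,
      γ₁ * ‖f‖ ^ 2 ≤ (∫ τ in t..(t + Δ), (⟪k (x τ), f⟫_ℝ) ^ 2) ∧
      (∫ τ in t..(t + Δ), (⟪k (x τ), f⟫_ℝ) ^ 2) ≤ γ₂ * ‖f‖ ^ 2) :
    ∃ T' > (0 : ℝ), ∃ Δ' > (0 : ℝ), ∃ δ > (0 : ℝ), ∃ γ > (0 : ℝ),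
      ∀ t ≥ T', ∀ f : H, ‖f‖ = 1 →
        ∃ s ∈ Icc t (t + Δ'), γ < |∫ τ in s..(s + δ), ⟪k (x τ), f⟫_ℝ| := by
  set c := √(γ₁ / (2 * Δ)) with hc
  have hcpos : 0 < c := Real.sqrt_pos.2 (by positivity)
  obtain ⟨δ₀, hδ₀, hδ⟩ := hequi (c / 2) (by positivity)
  -- Halving `δ₀` makes the closed interval `[s, s + δ₀ / 2]` fit the strict modulus;
  -- halving the bound `δ₀ / 2 * c / 2` makes the conclusion strict.
  refine ⟨T, hT, Δ, hΔ, δ₀ / 2, by positivity, δ₀ * c / 8, by positivity, fun t ht f hf => ?_⟩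
  have hlow := (hPE t ht f).1
  rw [hf, one_pow, mul_one] at hlow
  obtain ⟨s, hs, hgs⟩ :=
    exists_sq_gt_of_le_integral (fun τ => ⟪k (x τ), f⟫_ℝ) γ₁ t Δ hγ₁ hΔ hlow
  have hs0 : 0 ≤ s := by linarith [hs.1]
  have hint : IntervalIntegrable (fun τ => ⟪k (x τ), f⟫_ℝ) volume s (s + δ₀ / 2) := by
    refine ContinuousOn.intervalIntegrable ?_
    rw [uIcc_of_le (by linarith)]
    exact ((hk.comp_continuousOn hx).inner continuousOn_const).mono
      fun τ hτ => hs0.trans hτ.1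
  have hmain := le_abs_integral_of_near (fun τ => ⟪k (x τ), f⟫_ℝ) s (δ₀ / 2) c (by positivity)
    hint (Real.sqrt_le_sqrt hgs.le |>.trans_eq (Real.sqrt_sq_eq_abs _)) fun τ hτ =>
      (hδ f hf τ s (hs0.trans hτ.1) hs0 (by
        rw [abs_of_nonneg (by linarith [hτ.1])]
        linarith [hτ.2])).le
  refine ⟨s, hs, lt_of_lt_of_le ?_ hmain⟩
  have := mul_pos hδ₀ hcpos
  linarith
end
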